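/- If the measure center X^+ of a shift space X ⊆ 𝒜^∞ has the d̄-shadowing property, then X has the d̄-shadowing property. -/

import Mathlib

open MeasureTheory Filter Topology

namespace DbarPaper

variable {A : Type} [Fintype A] [DecidableEq A] [Inhabited A]
  [TopologicalSpace A] [DiscreteTopology A]
  [MeasurableSpace A] [MeasurableSingletonClass A]

/-- The shift map on the full shift `𝒜^∞ = ℕ → A`. -/
def shift : (ℕ → A) → (ℕ → A) := fun x n => x (n + 1)

/-- A shift space: a nonempty, closed, shift-invariant subset of the full shift. -/
def ShiftSpace (X : Set (ℕ → A)) : Prop :=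
  X.Nonempty ∧ IsClosed X ∧ ∀ x ∈ X, shift x ∈ X

/-- The word `w` appears in the sequence `x`. -/
def occursIn (w : List A) (x : ℕ → A) : Prop :=
  ∃ i : ℕ, w = List.ofFn (fun k : Fin w.length => x (i + (k : ℕ)))

/-- The language of a set `X`: all finite words appearing in points of `X`. -/
def lang (X : Set (ℕ → A)) : Set (List A) := {w | ∃ x ∈ X, occursIn w x}

/-- Words of length `n` in the language of `X`. -/
def langN (n : ℕ) (X : Set (ℕ → A)) : Set (List A) := {w | w ∈ lang X ∧ w.length = n}

/-- The pseudometric `d̄` on the full shift. -/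
noncomputable def dbar (x y : ℕ → A) : ℝ :=
  Filter.limsup
    (fun n => (((Finset.range n).filter (fun j => x j ≠ y j)).card : ℝ) / (n : ℝ))
    Filter.atTop

/-- Hausdorff "distance" between two sets induced by a `ℝ`-valued distance. -/
noncomputable def hausdist {Z : Type*} (d : Z → Z → ℝ) (P Q : Set Z) : ℝ :=
  max (⨆ p : P, ⨅ q : Q, d p q) (⨆ q : Q, ⨅ p : P, d p q)

/-- A probability measure is shift-invariant. -/
def invariantPM (μ : ProbabilityMeasure (ℕ → A)) : Prop :=
  (μ : Measure (ℕ → A)).map shift = (μ : Measure (ℕ → A))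

/-- `M_σ(X)`: shift-invariant Borel probability measures giving `X` full measure. -/
def Msigma (X : Set (ℕ → A)) : Set (ProbabilityMeasure (ℕ → A)) :=
  {μ | invariantPM μ ∧ μ X = 1}

/-- `ξ` is a joining of `μ` and `ν`: a `σ×σ`-invariant measure on the product with
marginals `μ` and `ν`. -/
def IsJoining (ξ : Measure ((ℕ → A) × (ℕ → A))) (μ ν : ProbabilityMeasure (ℕ → A)) : Prop :=
  ξ.map (Prod.map shift shift) = ξ ∧
  ξ.map Prod.fst = (μ : Measure (ℕ → A)) ∧ ξ.map Prod.snd = (ν : Measure (ℕ → A))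

/-- Ornstein's metric `d̄_M` on invariant measures. -/
noncomputable def dbarM (μ ν : ProbabilityMeasure (ℕ → A)) : ℝ :=
  sInf {r : ℝ | ∃ ξ : Measure ((ℕ → A) × (ℕ → A)),
    IsJoining ξ μ ν ∧ r = (ξ {p | p.1 0 ≠ p.2 0}).toReal}

/-- `d̄_M`-stability of a shift space (Austin). -/
def DbarMStable (X : Set (ℕ → A)) : Prop :=
  ∀ ε : ℝ, 0 < ε → ∃ U : Set (ProbabilityMeasure (ℕ → A)), IsOpen U ∧ Msigma X ⊆ U ∧
    ∀ ν ∈ U, invariantPM ν → ∃ μ ∈ Msigma X, dbarM μ ν < ε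

/-- The infinite concatenation of a sequence of (nonempty) words. -/
def concatSeq (w : ℕ → List A) : ℕ → A := fun n =>
  ((List.ofFn (fun i : Fin (n + 1) => w (i : ℕ))).flatten).getD n default

/-- The `d̄`-shadowing property. -/
def DbarShadowing (X : Set (ℕ → A)) : Prop :=
  ∀ ε : ℝ, 0 < ε → ∃ N : ℕ, 0 < N ∧ ∀ w : ℕ → List A,
    (∀ j, w j ∈ lang X) → (∀ j, N ≤ (w j).length) →
    ∃ x' ∈ X, dbar (concatSeq w) x' < ε

/-- `U_n(X)`: the union of cylinders of words of length `n` in the language of `X`. -/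
def cylNbhd (X : Set (ℕ → A)) (n : ℕ) : Set (ℕ → A) :=
  {x | List.ofFn (fun k : Fin n => x (k : ℕ)) ∈ lang X}

/-- The `n`-th (topological) Markov approximation of `X`: all sequences whose subwords of
length `n+1` belong to the language of `X`. -/
def markovApprox (X : Set (ℕ → A)) (n : ℕ) : Set (ℕ → A) :=
  {x | ∀ i : ℕ, List.ofFn (fun k : Fin (n + 1) => x (i + (k : ℕ))) ∈ lang X}

/-- Transitivity, in terms of the language. -/
def TransitiveShift (X : Set (ℕ → A)) : Prop :=
  ∀ u ∈ lang X, ∀ w ∈ lang X, ∃ v : List A, u ++ v ++ w ∈ lang X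

/-- Topological mixing, in terms of the language. -/
def MixingShift (X : Set (ℕ → A)) : Prop :=
  ∀ u ∈ lang X, ∀ w ∈ lang X, ∃ N : ℕ, ∀ m : ℕ, N ≤ m →
    ∃ v : List A, v.length = m ∧ u ++ v ++ w ∈ lang X

/-- Chain mixing: all but finitely many Markov approximations are topologically mixing. -/
def ChainMixing (X : Set (ℕ → A)) : Prop :=
  ∃ N : ℕ, ∀ n : ℕ, N ≤ n → MixingShift (markovApprox X n)

/-- `C` is the measure center of `X`: the smallest shift space contained in `X` of full
measure for every invariant measure of `X`. -/
def IsMeasureCenter (X C : Set (ℕ → A)) : Prop :=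
  ShiftSpace C ∧ C ⊆ X ∧ (∀ μ ∈ Msigma X, μ C = 1) ∧
  ∀ Y : Set (ℕ → A), ShiftSpace Y → Y ⊆ X → (∀ μ ∈ Msigma X, μ Y = 1) → C ⊆ Y

/-- Measure of the cylinder determined by a word of length `n`. -/
noncomputable def cylMeasure (μ : ProbabilityMeasure (ℕ → A)) {n : ℕ} (w : Fin n → A) : ℝ :=
  ((μ : Measure (ℕ → A)) {x | ∀ k : Fin n, x (k : ℕ) = w k}).toReal

/-- Entropy of the partition into cylinders of length `n`. -/
noncomputable def blockEntropy (μ : ProbabilityMeasure (ℕ → A)) (n : ℕ) : ℝ :=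
  -∑ w : Fin n → A, cylMeasure μ w * Real.log (cylMeasure μ w)

/-- Kolmogorov–Sinai entropy of a shift-invariant measure. -/
noncomputable def ksEntropy (μ : ProbabilityMeasure (ℕ → A)) : ℝ :=
  Filter.limsup (fun n => blockEntropy μ n / (n : ℝ)) Filter.atTop

/-- `μ` is ergodic for the shift. -/
def ErgodicPM (μ : ProbabilityMeasure (ℕ → A)) : Prop :=
  Ergodic shift (μ : Measure (ℕ → A))

/-- Ergodic measures are entropy dense in `M_σ(X)`. -/
def EntropyDense (X : Set (ℕ → A)) : Prop :=
  ∀ μ ∈ Msigma X, ∀ U : Set (ProbabilityMeasure (ℕ → A)), IsOpen U → μ ∈ U →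
    ∀ ε : ℝ, 0 < ε →
      ∃ ν ∈ Msigma X, ν ∈ U ∧ ErgodicPM ν ∧ |ksEntropy ν - ksEntropy μ| < ε

/-- Topological entropy of a shift space. -/
noncomputable def topEntropy (X : Set (ℕ → A)) : ℝ :=
  Filter.limsup (fun n => Real.log (Nat.card ↥(langN n X)) / (n : ℝ)) Filter.atTop

/-- The standard metric on the full shift. -/
noncomputable def rho (x y : ℕ → A) : ℝ :=
  open scoped Classical in
  if x = y then 0 else (2 : ℝ) ^ (-((sInf {j : ℕ | x j ≠ y j} : ℕ) : ℤ))

/-- Proximality of a shift space. -/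
def ProximalShift (X : Set (ℕ → A)) : Prop :=
  ∀ x ∈ X, ∀ y ∈ X,
    Filter.liminf (fun n => rho (shift^[n] x) (shift^[n] y)) Filter.atTop = 0

/-- Minimality of a shift space. -/
def MinimalShift (X : Set (ℕ → A)) : Prop :=
  ShiftSpace X ∧ ∀ Y : Set (ℕ → A), ShiftSpace Y → Y ⊆ X → Y = X

/-- An `A`-labeled directed multigraph on vertices `V` with edges `E`. -/
structure LabeledGraph (A V E : Type*) where
  src : E → V
  dst : E → V
  lab : E → A

namespace LabeledGraph

variable {A' V E : Type*}

/-- `es` is a path in `G` from `u` to `v`. -/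
def PathFromTo (G : LabeledGraph A' V E) (es : List E) (u v : V) : Prop :=
  es.Chain' (fun e f => G.dst e = G.src f) ∧
  es.head?.map G.src = some u ∧ es.getLast?.map G.dst = some v

/-- `G` is strongly connected. -/
def StronglyConnected (G : LabeledGraph A' V E) : Prop :=
  ∀ u v : V, ∃ es : List E, G.PathFromTo es u v

/-- `d` is the period of `G`: the gcd of lengths of closed paths. -/
def HasPeriod (G : LabeledGraph A' V E) (d : ℕ) : Prop :=
  (∀ (es : List E) (u : V), G.PathFromTo es u u → d ∣ es.length) ∧
  ∀ d' : ℕ, (∀ (es : List E) (u : V), G.PathFromTo es u u → d' ∣ es.length) → d' ∣ d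

/-- `b` is a safe symbol for `G`. -/
def SafeSymbol (G : LabeledGraph A' V E) (b : A') : Prop :=
  ∀ e : E, ∃ e' : E, G.src e' = G.src e ∧ G.dst e' = G.dst e ∧ G.lab e' = b

/-- The shift space presented by the labeled graph `G`: labels read along infinite paths. -/
def presents (G : LabeledGraph A' V E) : Set (ℕ → A') :=
  {x | ∃ e : ℕ → E, (∀ j, G.dst (e j) = G.src (e (j + 1))) ∧ ∀ j, x j = G.lab (e j)}

end LabeledGraph

/-- The coupling of a family of labeled graphs: an edge labeled `a` from `v` to `v'` exists
iff each `G k` has an edge from `v k` to `v' k` labeled `a`. -/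
def coupling {A' : Type*} {n : ℕ} {V E : Fin n → Type*}
    (G : ∀ k, LabeledGraph A' (V k) (E k)) :
    LabeledGraph A' (∀ k, V k) {p : (∀ k, E k) × A' // ∀ k, (G k).lab (p.1 k) = p.2} where
  src p := fun k => (G k).src (p.1.1 k)
  dst p := fun k => (G k).dst (p.1.1 k)
  lab p := p.1.2

/-- Sofic shift spaces: those presented by some finite labeled graph. -/
def Sofic (X : Set (ℕ → A)) : Prop :=
  ∃ (V E : Type) (_ : Fintype V) (_ : Fintype E) (G : LabeledGraph A V E),
    X = G.presents

/-- The coded shift generated by a finite set of words `B`: the closure of the set of all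
shifts of infinite concatenations of words from `B`. -/
def codedShift (B : Finset (List A)) : Set (ℕ → A) :=
  closure {x | ∃ (b : ℕ → List A) (k : ℕ), (∀ i, b i ∈ B) ∧ x = shift^[k] (concatSeq b)}

end DbarPaper

namespace DbarPaper

section

variable {A : Type}

theorem shift_iterate_apply (x : ℕ → A) (i n : ℕ) : shift^[i] x n = x (i + n) := by
  induction i generalizing x with
  | zero => simp
  | succ i ih => rw [Function.iterate_succ_apply, ih, shift]; congr 1; omega

/-- The number of times `j < n` at which the orbit of `x` visits `B`. -/
noncomputable def visits (B : Set (ℕ → A)) (x : ℕ → A) (n : ℕ) : ℕ :=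
  open scoped Classical in ((Finset.range n).filter (fun j => shift^[j] x ∈ B)).card

theorem visits_le (B : Set (ℕ → A)) (x : ℕ → A) (n : ℕ) : visits B x n ≤ n := by
  classical
  exact (Finset.card_filter_le _ _).trans (Finset.card_range n).le

theorem visits_add (B : Set (ℕ → A)) (x : ℕ → A) (s m : ℕ) :
    visits B x (s + m) = visits B x s + visits B (shift^[s] x) m := by
  classical
  simp only [visits, Finset.card_filter, Finset.sum_range_add]
  congr 1
  refine Finset.sum_congr rfl fun j _ => ?_
  rw [← Function.iterate_add_apply, add_comm j s]

/-- A set determined by the first `N` coordinates is visited almost equally often by sequences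
agreeing on an initial segment. -/
theorem visits_le_of_agree {B : Set (ℕ → A)} {N : ℕ}
    (hB : ∀ x y : ℕ → A, (∀ k < N, x k = y k) → x ∈ B → y ∈ B)
    {x y : ℕ → A} {m : ℕ} (hxy : ∀ k < m, x k = y k) :
    visits B x m ≤ visits B y m + N := by
  classical
  rcases le_total m N with h | h
  · exact (visits_le B x m).trans (by omega)
  · obtain ⟨l, rfl⟩ := Nat.exists_eq_add_of_le' h
    have h1 : visits B x l ≤ visits B y l := by
      refine Finset.card_le_card fun j hj => ?_
      simp only [Finset.mem_filter, Finset.mem_range] at hj ⊢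
      refine ⟨hj.1, hB _ _ (fun k hk => ?_) hj.2⟩
      rw [shift_iterate_apply, shift_iterate_apply]
      exact hxy _ (by omega)
    have h2 := visits_le B (shift^[l] x) N
    rw [visits_add, visits_add]
    omega

theorem visits_eq_self {B : Set (ℕ → A)} {x : ℕ → A} (h : ∀ j, shift^[j] x ∈ B) (n : ℕ) :
    visits B x n = n := by
  simp [visits, h]

/-- The total length of the first `k` words. -/
def totalLength (w : ℕ → List A) (k : ℕ) : ℕ := ∑ i ∈ Finset.range k, (w i).length

theorem mul_le_totalLength {w : ℕ → List A} {N : ℕ} (hw : ∀ j, N ≤ (w j).length) (k : ℕ) :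
    k * N ≤ totalLength w k := by
  simpa [totalLength] using Finset.card_nsmul_le_sum (Finset.range k) _ N fun j _ => hw j

theorem exists_totalLength_add {w : ℕ → List A} (hw : ∀ j, 1 ≤ (w j).length) (n : ℕ) :
    ∃ k m, m ≤ (w k).length ∧ totalLength w k + m = n := by
  have hex : ∃ k, n < totalLength w (k + 1) :=
    ⟨n, by have := mul_le_totalLength hw (n + 1); omega⟩
  have hsucc : ∀ k, totalLength w (k + 1) = totalLength w k + (w k).length :=
    fun k => Finset.sum_range_succ _ _
  classical
  have h1 := Nat.find_spec hex
  have h2 : totalLength w (Nat.find hex) ≤ n := by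
    rcases hk : Nat.find hex with _ | k
    · simp [totalLength]
    · exact not_lt.1 (Nat.find_min hex (m := k) (by omega))
  rw [hsucc] at h1
  exact ⟨Nat.find hex, n - totalLength w (Nat.find hex), by omega, by omega⟩

theorem subset_cylNbhd (C : Set (ℕ → A)) (N : ℕ) : C ⊆ cylNbhd C N := fun c hc =>
  ⟨c, hc, 0, by simp⟩

end

section

variable {A : Type} [Inhabited A]

theorem concatSeq_apply {w : ℕ → List A} (hw : ∀ j, 1 ≤ (w j).length) {k p : ℕ}
    (hp : p < (w k).length) : concatSeq w (totalLength w k + p) = (w k)[p] := by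
  have hsucc : ∀ m, (List.ofFn (fun i : Fin (m + 1) => w i)).flatten =
      (List.ofFn (fun i : Fin m => w i)).flatten ++ w m := fun m => by
    rw [List.ofFn_succ_last]; simp
  have hlen : ∀ m, (List.ofFn (fun i : Fin m => w i)).flatten.length = totalLength w m := fun m => by
    induction m with
    | zero => simp [totalLength]
    | succ m ih =>
      rw [hsucc, List.length_append, ih, totalLength, totalLength, Finset.sum_range_succ]
  have hget : ∀ m, k + 1 ≤ m → (List.ofFn (fun i : Fin m => w i)).flatten.getD
      (totalLength w k + p) default = (w k)[p] := fun m hm => by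
    induction m, hm using Nat.le_induction with
    | base =>
      rw [hsucc, List.getD_append_right _ _ _ _ (by rw [hlen]; omega), hlen]
      simp [hp]
    | succ m hm ih =>
      rw [hsucc, List.getD_append _ _ _ _ ?_, ih]
      have hmono : totalLength w (k + 1) ≤ totalLength w m :=
        Finset.sum_le_sum_of_subset (Finset.range_mono hm)
      rw [totalLength, Finset.sum_range_succ, ← totalLength] at hmono
      rw [hlen]; omega
  have := mul_le_totalLength hw k
  exact hget _ (by omega)

/-- Visits of a concatenation of orbit segments of `X`. -/
theorem visits_concatSeq_le {X B : Set (ℕ → A)} (hX : ∀ x ∈ X, shift x ∈ X) {N : ℕ}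
    (hB : ∀ x y : ℕ → A, (∀ k < N, x k = y k) → x ∈ B → y ∈ B)
    {δ : ℝ} {M : ℕ} (hM : ∀ x ∈ X, ∀ n, (visits B x n : ℝ) ≤ δ * n + M)
    {w : ℕ → List A} (hw : ∀ j, w j ∈ lang X) (hw1 : ∀ j, 1 ≤ (w j).length) (k : ℕ) :
    ∀ m ≤ (w k).length, (visits B (concatSeq w) (totalLength w k + m) : ℝ) ≤
      δ * (totalLength w k + m : ℕ) + (k + 1) * (M + N) := by
  have hstep : ∀ k, ∀ m ≤ (w k).length,
      (visits B (shift^[totalLength w k] (concatSeq w)) m : ℝ) ≤ δ * m + (M + N) := by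
    intro k m hm
    obtain ⟨x, hx, i, hi⟩ := hw k
    have hxi : shift^[i] x ∈ X := by
      clear hi
      induction i with
      | zero => exact hx
      | succ i ih => rw [Function.iterate_succ_apply']; exact hX _ ih
    have hagree := visits_le_of_agree hB (x := shift^[totalLength w k] (concatSeq w))
      (y := shift^[i] x) (m := m) (fun p hp => by
        rw [shift_iterate_apply, shift_iterate_apply,
          concatSeq_apply hw1 (hp.trans_le hm)]
        have := List.getElem_of_eq hi (hp.trans_le hm)
        simpa using this)
    have h2 := hM _ hxi m
    have h3 : (visits B (shift^[totalLength w k] (concatSeq w)) m : ℝ) ≤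
      visits B (shift^[i] x) m + N := by exact_mod_cast hagree
    linarith
  induction k with
  | zero =>
    intro m hm
    simpa [totalLength] using hstep 0 m hm
  | succ k ih =>
    intro m hm
    have h1 := ih _ le_rfl
    have h2 := hstep (k + 1) m hm
    have h3 : totalLength w (k + 1) = totalLength w k + (w k).length :=
      Finset.sum_range_succ _ _
    rw [← h3] at h1
    rw [visits_add]
    push_cast
    linarith

end

section

variable {A : Type} [DecidableEq A]

/-- The number of mismatches of `x` and `y` before time `n`. -/
def mismatches (x y : ℕ → A) (n : ℕ) : ℕ := ((Finset.range n).filter (fun j => x j ≠ y j)).card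

theorem mismatches_div_le_one (x y : ℕ → A) (n : ℕ) : (mismatches x y n : ℝ) / n ≤ 1 :=
  div_le_one_of_le₀ (by
    exact_mod_cast (Finset.card_filter_le _ _).trans (Finset.card_range n).le) (by positivity)

theorem isBoundedUnder_le_mismatches (x y : ℕ → A) :
    IsBoundedUnder (· ≤ ·) atTop (fun n => (mismatches x y n : ℝ) / n) :=
  isBoundedUnder_of ⟨1, mismatches_div_le_one x y⟩

theorem isBoundedUnder_ge_mismatches (x y : ℕ → A) :
    IsBoundedUnder (· ≥ ·) atTop (fun n => (mismatches x y n : ℝ) / n) :=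
  isBoundedUnder_of ⟨0, fun n => by positivity⟩

theorem dbar_triangle (x y z : ℕ → A) : dbar x z ≤ dbar x y + dbar y z := by
  have hxy := isBoundedUnder_le_mismatches x y
  have hyz := isBoundedUnder_le_mismatches y z
  have hxy' := isBoundedUnder_ge_mismatches x y
  have hyz' := isBoundedUnder_ge_mismatches y z
  have hxz' := isBoundedUnder_ge_mismatches x z
  refine le_trans ?_ (limsup_add_le hxy' hxy hyz'.isCoboundedUnder_le hyz)
  refine limsup_le_limsup (Eventually.of_forall fun n => ?_) hxz'.isCoboundedUnder_le
    (isBoundedUnder_of ⟨1 + 1, fun n =>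
      add_le_add (mismatches_div_le_one x y n) (mismatches_div_le_one y z n)⟩)
  have : mismatches x z n ≤ mismatches x y n + mismatches y z n := by
    refine le_trans (Finset.card_le_card fun j hj => ?_) (Finset.card_union_le _ _)
    simp only [Finset.mem_union, Finset.mem_filter] at hj ⊢
    by_cases h : x j = y j
    · exact Or.inr ⟨hj.1, h ▸ hj.2⟩
    · exact Or.inl ⟨hj.1, h⟩
  change (mismatches x z n : ℝ) / n ≤ mismatches x y n / n + mismatches y z n / n
  rw [← add_div]
  gcongr
  exact_mod_cast this

theorem dbar_le_of_mismatches_le {x y : ℕ → A} {a b : ℝ}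
    (h : ∀ n, (mismatches x y n : ℝ) ≤ a * n + b) : dbar x y ≤ a := by
  have hlim : Tendsto (fun n : ℕ => a + b / n) atTop (𝓝 a) := by
    simpa using (tendsto_const_div_atTop_nhds_zero_nat b).const_add a
  rw [← hlim.limsup_eq]
  refine limsup_le_limsup ?_ (isBoundedUnder_ge_mismatches x y).isCoboundedUnder_le
    hlim.isBoundedUnder_le
  filter_upwards [eventually_gt_atTop 0] with n hn
  have hn' : (0 : ℝ) < n := by exact_mod_cast hn
  change (mismatches x y n : ℝ) / n ≤ _
  rw [div_le_iff₀ hn', add_mul, div_mul_cancel₀ _ hn'.ne']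
  exact h n

end

section

variable {A : Type} [DecidableEq A] [Inhabited A]

/-- Replacing the aligned blocks of length `N` of `y` that are not in the language of `C` by words
of `C` costs at most `N` mismatches per bad block. -/
theorem exists_concatSeq_mismatches_le {C : Set (ℕ → A)} (hC : C.Nonempty) {N : ℕ} (hN : 0 < N)
    (y : ℕ → A) : ∃ v : ℕ → List A, (∀ j, v j ∈ lang C) ∧ (∀ j, (v j).length = N) ∧
      ∀ n, mismatches y (concatSeq v) n ≤ N * visits (cylNbhd C N)ᶜ y n := by
  classical
  obtain ⟨c, hc⟩ := hC
  let block : (ℕ → A) → List A := fun z => List.ofFn (fun k : Fin N => z k)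
  let v : ℕ → List A := fun j =>
    if shift^[j * N] y ∈ cylNbhd C N then block (shift^[j * N] y) else block c
  have hvlen : ∀ j, (v j).length = N := fun j => by
    simp only [v, block]; split_ifs <;> simp
  refine ⟨v, fun j => ?_, hvlen, fun n => ?_⟩
  · by_cases h : shift^[j * N] y ∈ cylNbhd C N
    · simp only [v, h, if_true]
      exact h
    · simp only [v, h, if_false]
      exact ⟨c, hc, 0, by simp [block]⟩
  · refine Finset.card_le_mul_card_image_of_maps_to (f := fun j => j / N * N) ?_ N ?_
    · intro j hj
      simp only [Finset.mem_filter, Finset.mem_range] at hj ⊢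
      refine ⟨(Nat.div_mul_le_self j N).trans_lt hj.1, fun hgood => hj.2 ?_⟩
      have htot : totalLength v (j / N) = j / N * N := by simp [totalLength, hvlen]
      have hmod : j % N < (v (j / N)).length := by rw [hvlen]; exact Nat.mod_lt _ hN
      have happ := concatSeq_apply (w := v) (fun i => by rw [hvlen]; exact hN) hmod
      rw [htot, Nat.div_add_mod'] at happ
      rw [happ]
      simp only [v, hgood, if_true, block, List.getElem_ofFn, shift_iterate_apply,
        Nat.div_add_mod']
    · intro p _
      refine (Finset.card_le_card (t := Finset.Ico p (p + N)) fun j hj => ?_).trans (by simp)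
      simp only [Finset.mem_filter, Finset.mem_Ico] at hj ⊢
      have h1 := Nat.div_add_mod' j N
      have h2 := Nat.mod_lt j hN
      omega

end

section

variable {A : Type} [TopologicalSpace A]

theorem continuous_shift : Continuous (shift : (ℕ → A) → (ℕ → A)) :=
  continuous_pi fun n => continuous_apply (n + 1)

end

section

variable {A : Type} [TopologicalSpace A] [DiscreteTopology A]

theorem isClopen_cylNbhd (C : Set (ℕ → A)) (N : ℕ) : IsClopen (cylNbhd C N) :=
  (isClopen_discrete {u : Fin N → A | List.ofFn u ∈ lang C}).preimage
    (f := fun (x : ℕ → A) (k : Fin N) => x k) (by fun_prop)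

end

section

variable {A : Type} [MeasurableSpace A]

/-- The empirical measure of the orbit segment of length `n + 1` of `x`. -/
noncomputable def empirical (x : ℕ → A) (n : ℕ) : Measure (ℕ → A) :=
  ((n + 1 : ℕ) : ENNReal)⁻¹ • ∑ j ∈ Finset.range (n + 1), Measure.dirac (shift^[j] x)

theorem empirical_apply (x : ℕ → A) (n : ℕ) {B : Set (ℕ → A)} (hB : MeasurableSet B) :
    empirical x n B = ((n + 1 : ℕ) : ENNReal)⁻¹ * visits B x (n + 1) := by
  classical
  rw [empirical, Measure.smul_apply, Measure.finsetSum_apply, smul_eq_mul, visits,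
    Finset.card_filter, Nat.cast_sum]
  congr 1
  refine Finset.sum_congr rfl fun j _ => ?_
  rw [Measure.dirac_apply' _ hB]
  by_cases h : shift^[j] x ∈ B <;> simp [h]

instance (x : ℕ → A) (n : ℕ) : IsProbabilityMeasure (empirical x n) := by
  refine ⟨?_⟩
  rw [empirical_apply x n MeasurableSet.univ, visits_eq_self (fun _ => Set.mem_univ _)]
  exact ENNReal.inv_mul_cancel (by simp) (ENNReal.natCast_ne_top _)

/-- The empirical measure of an orbit segment, as a probability measure. -/
noncomputable def empiricalPM (x : ℕ → A) (n : ℕ) : ProbabilityMeasure (ℕ → A) :=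
  ⟨empirical x n, inferInstance⟩

end

section

variable {A : Type} [Fintype A] [TopologicalSpace A] [DiscreteTopology A]
  [MeasurableSpace A] [MeasurableSingletonClass A]

theorem integral_empirical (x : ℕ → A) (n : ℕ) (f : BoundedContinuousFunction (ℕ → A) ℝ) :
    ∫ z, f z ∂(empirical x n) =
      ((n + 1 : ℕ) : ℝ)⁻¹ * ∑ j ∈ Finset.range (n + 1), f (shift^[j] x) := by
  rw [empirical, integral_smul_measure, integral_finsetSum_measure]
  · simp [integral_dirac, ENNReal.toReal_inv, ENNReal.toReal_natCast, -Nat.cast_add]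
  · intro i _
    exact f.integrable _

/-- An ultrafilter limit of empirical measures along orbit segments of unbounded length is
shift-invariant. -/
theorem invariantPM_of_tendsto_empirical {F : Filter ℕ} [F.NeBot] {x : ℕ → ℕ → A} {n : ℕ → ℕ}
    (hn : Tendsto n F atTop) {μ : ProbabilityMeasure (ℕ → A)}
    (hμ : Tendsto (fun i => empiricalPM (x i) (n i)) F (𝓝 μ)) : invariantPM μ := by
  have hmap : IsProbabilityMeasure ((μ : Measure (ℕ → A)).map shift) :=
    Measure.isProbabilityMeasure_map continuous_shift.measurable.aemeasurable
  refine ext_of_forall_integral_eq_of_IsFiniteMeasure fun f => ?_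
  rw [integral_map continuous_shift.measurable.aemeasurable
    f.continuous.measurable.aestronglyMeasurable]
  rw [ProbabilityMeasure.tendsto_iff_forall_integral_tendsto] at hμ
  have h1 := hμ f
  have h2 := hμ (f.compContinuous ⟨shift, continuous_shift⟩)
  have h3 := h2.sub h1
  have h4 : Tendsto (fun i => 2 * ‖f‖ * (1 / ((n i : ℝ) + 1))) F (𝓝 0) := by
    simpa using (tendsto_one_div_add_atTop_nhds_zero_nat.comp hn).const_mul (2 * ‖f‖)
  refine sub_eq_zero.1 (tendsto_nhds_unique h3 (squeeze_zero_norm (fun i => ?_) h4))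
  · simp only [empiricalPM, ProbabilityMeasure.coe_mk, integral_empirical]
    rw [← mul_sub, ← Finset.sum_sub_distrib]
    have : ∀ j, (f.compContinuous ⟨shift, continuous_shift⟩) (shift^[j] (x i))
        = f (shift^[j + 1] (x i)) := fun j => by
      rw [Function.iterate_succ_apply']; rfl
    simp only [this]
    rw [Finset.sum_range_sub (fun j => f (shift^[j] (x i))), norm_mul, mul_comm]
    have hb := (norm_sub_le (f (shift^[n i + 1] (x i))) (f (shift^[0] (x i)))).trans
      (add_le_add (f.norm_coe_le_norm _) (f.norm_coe_le_norm _))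
    rw [← two_mul] at hb
    refine mul_le_mul hb ?_ (norm_nonneg _) (by positivity)
    rw [Real.norm_of_nonneg (by positivity)]
    simp

/-- Orbits in `X` rarely visit a clopen set which is null for all invariant measures. -/
theorem exists_visits_le {X : Set (ℕ → A)} (hX : ShiftSpace X)
    {B : Set (ℕ → A)} (hB : IsClopen B) (hnull : ∀ μ ∈ Msigma X, μ B = 0)
    {δ : ℝ} (hδ : 0 < δ) :
    ∃ M : ℕ, ∀ x ∈ X, ∀ n, (visits B x n : ℝ) ≤ δ * n + M := by
  by_contra! h
  choose x hxX n hn using h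
  have hMn : ∀ M, M < n M := fun M => by
    have h1 := hn M
    have h2 : (visits B (x M) (n M) : ℝ) ≤ n M := by exact_mod_cast visits_le _ _ _
    have h3 : 0 ≤ δ * n M := by positivity
    exact_mod_cast (by linarith : (M : ℝ) < n M)
  have hXs : ∀ M j, shift^[j] (x M) ∈ X := fun M j => by
    induction j with
    | zero => exact hxX M
    | succ j ih => rw [Function.iterate_succ_apply']; exact hX.2.2 _ ih
  let m : ℕ → ProbabilityMeasure (ℕ → A) := fun M => empiricalPM (x M) (n M - 1)
  obtain ⟨μ, -, hμ⟩ := isCompact_univ.ultrafilter_le_nhds' ((hyperfilter ℕ).map m) univ_mem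
  have hμ' : Tendsto m (hyperfilter ℕ : Filter ℕ) (𝓝 μ) := hμ
  have hatTop : Tendsto (fun M => n M - 1) (hyperfilter ℕ : Filter ℕ) atTop := by
    refine Tendsto.mono_left ?_ Nat.hyperfilter_le_atTop
    exact tendsto_atTop_mono (fun M => Nat.le_sub_one_of_lt (hMn M)) tendsto_id
  have hinv := invariantPM_of_tendsto_empirical hatTop hμ'
  have hone : ∀ M, (m M : Measure (ℕ → A)) X = 1 := fun M => by
    change empirical (x M) (n M - 1) X = 1
    rw [empirical_apply _ _ hX.2.1.measurableSet, visits_eq_self (hXs M)]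
    exact ENNReal.inv_mul_cancel (by simp) (ENNReal.natCast_ne_top _)
  have hμX : μ X = 1 := by
    have h1 := ProbabilityMeasure.limsup_measure_closed_le_of_tendsto hμ' hX.2.1
    simp only [hone, limsup_const] at h1
    have h2 : (μ : Measure (ℕ → A)) X = 1 := le_antisymm prob_le_one h1
    rw [← ENNReal.coe_inj, ProbabilityMeasure.ennreal_coeFn_eq_coeFn_toMeasure, h2]; rfl
  have hμB := hnull μ ⟨hinv, hμX⟩
  have hlim := ENNReal.tendsto_coe.2
    (ProbabilityMeasure.tendsto_measure_of_isClopen_of_tendsto hμ' hB)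
  simp only [hμB, ENNReal.coe_zero, ProbabilityMeasure.ennreal_coeFn_eq_coeFn_toMeasure] at hlim
  have hlow : ENNReal.ofReal δ ≤ 0 := by
    refine ge_of_tendsto' hlim fun M => ?_
    change _ ≤ empirical (x M) (n M - 1) B
    have hpos := (Nat.zero_le M).trans_lt (hMn M)
    rw [empirical_apply _ _ hB.1.measurableSet, Nat.sub_add_cancel hpos, mul_comm, ← div_eq_mul_inv,
      ENNReal.le_div_iff_mul_le (by simp [hpos.ne']) (by simp), ← ENNReal.ofReal_natCast,
      ← ENNReal.ofReal_natCast, ← ENNReal.ofReal_mul hδ.le]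
    refine ENNReal.ofReal_le_ofReal ?_
    have := hn M
    have h0 : (0 : ℝ) ≤ M := by positivity
    linarith
  simp [hδ.not_ge] at hlow

end

section

variable {A : Type} [Fintype A] [DecidableEq A] [Inhabited A]
  [TopologicalSpace A] [DiscreteTopology A]
  [MeasurableSpace A] [MeasurableSingletonClass A]

/-- if the measure center of `X` has the `d̄`-shadowing property, then so
does `X`. -/
theorem statement12 (hA : 2 ≤ Fintype.card A) (X C : Set (ℕ → A)) (hX : ShiftSpace X)
    (hC : IsMeasureCenter X C) (hshad : DbarShadowing C) :
    DbarShadowing X := by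
  intro ε hε
  obtain ⟨N, hN, hsh⟩ := hshad (ε / 2) (half_pos hε)
  set B : Set (ℕ → A) := (cylNbhd C N)ᶜ with hBdef
  have hBloc : ∀ x y : ℕ → A, (∀ k < N, x k = y k) → x ∈ B → y ∈ B := by
    intro x y hxy hx hy
    refine hx ?_
    have : (fun k : Fin N => x k) = fun k : Fin N => y k := funext fun k => hxy k k.2
    simpa only [cylNbhd, Set.mem_ofPred_eq, this] using hy
  have hnull : ∀ μ ∈ Msigma X, μ B = 0 := by
    intro μ hμ
    have h1 : (μ : Measure (ℕ → A)) C = 1 := by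
      rw [← ProbabilityMeasure.ennreal_coeFn_eq_coeFn_toMeasure, hC.2.2.1 μ hμ]; rfl
    have h2 : (μ : Measure (ℕ → A)) B = 0 := measure_mono_null
      (Set.compl_subset_compl.2 (subset_cylNbhd C N))
      ((prob_compl_eq_zero_iff hC.1.2.1.measurableSet).2 h1)
    rw [← ENNReal.coe_inj, ProbabilityMeasure.ennreal_coeFn_eq_coeFn_toMeasure, h2]; rfl
  have hN' : (0 : ℝ) < N := by exact_mod_cast hN
  obtain ⟨δ, hδ, hδN⟩ : ∃ δ : ℝ, 0 < δ ∧ N * (2 * δ) = ε / 2 :=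
    ⟨ε / (4 * N), by positivity, by field_simp; norm_num⟩
  obtain ⟨M, hM⟩ := exists_visits_le hX (isClopen_cylNbhd C N).compl hnull hδ
  obtain ⟨L, hL⟩ := exists_nat_ge ((M + N) / δ)
  rw [div_le_iff₀ hδ] at hL
  refine ⟨L + 1, Nat.succ_pos L, fun w hw hwL => ?_⟩
  have hw1 : ∀ j, 1 ≤ (w j).length := fun j => by have := hwL j; omega
  have hvis : ∀ n, (visits B (concatSeq w) n : ℝ) ≤ 2 * δ * n + (M + N) := by
    intro n
    obtain ⟨k, m, hm, rfl⟩ := exists_totalLength_add hw1 n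
    have h1 := visits_concatSeq_le hX.2.2 hBloc hM hw hw1 k m hm
    have h2 : (k : ℝ) * (L + 1) ≤ (totalLength w k + m : ℕ) := by
      exact_mod_cast (mul_le_totalLength hwL k).trans (Nat.le_add_right _ _)
    have h3 : (k : ℝ) * (M + N) ≤ δ * (totalLength w k + m : ℕ) := by
      have h4 : (k : ℝ) * (M + N) ≤ k * (L * δ) := by gcongr
      have h5 : (k : ℝ) * (L * δ) ≤ δ * (k * (L + 1)) := by
        have : 0 ≤ δ * (k : ℝ) := by positivity
        linarith
      exact h4.trans (h5.trans (by gcongr))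
    linarith
  obtain ⟨v, hv, hvlen, hmis⟩ := exists_concatSeq_mismatches_le hC.1.1 hN (concatSeq w)
  obtain ⟨x', hx', hdx⟩ := hsh v hv fun j => (hvlen j).ge
  refine ⟨x', hC.2.1 hx', ?_⟩
  have hd : dbar (concatSeq w) (concatSeq v) ≤ ε / 2 := by
    refine dbar_le_of_mismatches_le (b := N * (M + N)) fun n => ?_
    have h1 : (mismatches (concatSeq w) (concatSeq v) n : ℝ) ≤ N * visits B (concatSeq w) n := by
      exact_mod_cast hmis n
    have h2 := mul_le_mul_of_nonneg_left (hvis n) hN'.le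
    rw [← hδN]
    linarith
  linarith [dbar_triangle (concatSeq w) (concatSeq v) x']

end

end DbarPaper
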